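/- arXiv:2601.03491 — 12 statements merged into one kernel-verified Lean document; each statement's English description precedes it below -/
import Mathlib

section
/- Let M be a positive integer and define the sequence (α_j)_{j≥2} by α_2 = ⌊M/2⌋ and α_{j+1} = ⌊(M + α_j)/2⌋ for j ≥ 2. For each j ≥ 2, write M = 2^(j-1)·Q_j + N_j with integers Q_j ≥ 0 and 0 ≤ N_j ≤ 2^(j-1) - 1 (i.e., Q_j = ⌊M/2^(j-1)⌋ and N_j = M mod 2^(j-1)). Then for every j ≥ 2, α_j = (2^(j-1) - 1)·Q_j + 0 if N_j ≤ 1, and α_j = (2^(j-1) - 1)·Q_j + (N_j - 1) if N_j ≥ 2. -/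
/-- Let `M ≥ 1` and let `(α_j)_{j ≥ 2}` satisfy `α 2 = ⌊M/2⌋` and
`α (j+1) = ⌊(M + α j)/2⌋` for `j ≥ 2`.  Writing `M = 2^(j-1)·Q_j + N_j` with
`Q_j = ⌊M / 2^(j-1)⌋` and `N_j = M mod 2^(j-1)`, we have, for every `j ≥ 2`,
`α j = (2^(j-1) - 1)·Q_j` if `N_j ≤ 1`, and `α j = (2^(j-1) - 1)·Q_j + (N_j - 1)`
otherwise. -/
theorem stmt_3 (M : ℕ) (hM : 1 ≤ M) (α : ℕ → ℕ)
    (h2 : α 2 = M / 2) (hrec : ∀ j, 2 ≤ j → α (j + 1) = (M + α j) / 2) :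
    ∀ j, 2 ≤ j →
      α j = (2 ^ (j - 1) - 1) * (M / 2 ^ (j - 1)) +
        (if M % 2 ^ (j - 1) ≤ 1 then 0 else M % 2 ^ (j - 1) - 1) := by
  have key : ∀ k, α (k + 2) + M / 2 ^ (k + 1) + (if M % 2 ^ (k + 1) = 0 then 0 else 1) = M := by
    intro k
    induction k with
    | zero =>
      simp only [zero_add, pow_one, h2]
      split_ifs <;> omega
    | succ k ih =>
      have hr := hrec (k + 2) (by omega)
      have e1 : M / 2 ^ (k + 1 + 1) = M / 2 ^ (k + 1) / 2 := by
        rw [pow_succ 2 (k + 1), Nat.div_div_eq_div_mul]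
      have e2 : M % 2 ^ (k + 1 + 1)
          = M % 2 ^ (k + 1) + 2 ^ (k + 1) * (M / 2 ^ (k + 1) % 2) := by
        rw [pow_succ 2 (k + 1), Nat.mod_mul]
      have hP : 0 < 2 ^ (k + 1) := by positivity
      rw [show k + 1 + 2 = k + 2 + 1 by ring, hr, e1, e2]
      generalize 2 ^ (k + 1) = P at *
      rcases Nat.mod_two_eq_zero_or_one (M / P) with h | h <;> rw [h] <;>
        split_ifs at ih ⊢ <;> omega
  intro j hj
  obtain ⟨k, rfl⟩ := Nat.exists_eq_add_of_le' hj
  have hk := key k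
  rw [show k + 2 - 1 = k + 1 by omega]
  have hP : 0 < 2 ^ (k + 1) := by positivity
  generalize 2 ^ (k + 1) = P at *
  have hd := Nat.div_add_mod M P
  obtain ⟨p, rfl⟩ : ∃ p, P = p + 1 := ⟨P - 1, by omega⟩
  rw [add_mul, one_mul] at hd
  rw [Nat.add_sub_cancel]
  split_ifs at hk ⊢ <;> omega
end

section
/- Let m ≥ 2 be an integer that is not a power of 2, and let e ≥ 2 be an integer satisfying 2^(⌈log₂ m⌉ + e - 1) - (2^e - 1)·m + (2^(e-1) - 1) < 0. Define the sequence (α_j)_{j≥2} by α_2 = ⌊m/2⌋ and α_{j+1} = ⌊(m + α_j)/2⌋. Then α_e ≥ 2^(⌈log₂ m⌉) - m + 1. -/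
/-- Let `m ≥ 2` be an integer that is not a power of `2`, and let `e ≥ 2` satisfy
`2^(⌈log₂ m⌉ + e - 1) - (2^e - 1)·m + (2^(e-1) - 1) < 0`.  If `(α_j)_{j ≥ 2}` is
the sequence with `α 2 = ⌊m/2⌋` and `α (j+1) = ⌊(m + α j)/2⌋`, then
`α e ≥ 2^(⌈log₂ m⌉) - m + 1`. -/
theorem stmt_5 (m : ℕ) (hm : 2 ≤ m) (hpow : ¬ ∃ k : ℕ, m = 2 ^ k)
    (e : ℕ) (he : 2 ≤ e)
    (hineq : (2 : ℤ) ^ (Nat.clog 2 m + e - 1) - (2 ^ e - 1) * (m : ℤ)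
      + (2 ^ (e - 1) - 1) < 0)
    (α : ℕ → ℕ) (h2 : α 2 = m / 2) (hrec : ∀ j, 2 ≤ j → α (j + 1) = (m + α j) / 2) :
    (α e : ℤ) ≥ 2 ^ (Nat.clog 2 m) - (m : ℤ) + 1 := by
  have key : ∀ k : ℕ, ((2 : ℤ) ^ (k + 1) - 1) * ((m : ℤ) - 1) ≤ 2 ^ (k + 1) * (α (k + 2) : ℤ) := by
    intro k
    induction k with
    | zero =>
      have h : (m : ℤ) - 1 ≤ 2 * (α 2 : ℤ) := by omega
      norm_num
      linarith
    | succ k ih =>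
      have h1 := hrec (k + 2) (by omega)
      have h : (m : ℤ) + α (k + 2) - 1 ≤ 2 * (α (k + 1 + 2) : ℤ) := by
        have h3 : α (k + 1 + 2) = (m + α (k + 2)) / 2 := h1
        omega
      have hP : (0 : ℤ) < 2 ^ (k + 1) := by positivity
      have hs : (2 : ℤ) ^ (k + 1 + 1) = 2 * 2 ^ (k + 1) := by ring
      rw [hs]
      nlinarith [mul_le_mul_of_nonneg_left h hP.le]
  obtain ⟨k, rfl⟩ : ∃ k, e = k + 2 := ⟨e - 2, by omega⟩
  have hk := key k
  have e1 : Nat.clog 2 m + (k + 2) - 1 = (k + 1) + Nat.clog 2 m := by omega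
  have e2 : k + 2 - 1 = k + 1 := by omega
  rw [e1, e2, pow_add, show (2 : ℤ) ^ (k + 2) = 2 * 2 ^ (k + 1) by ring] at hineq
  have hP : (0 : ℤ) < 2 ^ (k + 1) := by positivity
  generalize (2 : ℤ) ^ (k + 1) = P at *
  generalize (2 : ℤ) ^ (Nat.clog 2 m) = C at *
  have hlt : P * (C - m) < P * (α (k + 2) : ℤ) := by nlinarith
  have := lt_of_mul_lt_mul_left hlt hP.le
  omega
end

section
/- Let n, m, e, s be integers with n ≥ 1, m ≥ 1, e ≥ 1, s ≥ 1, and set q := 2^(e+s-1). Then there exist no nonnegative integers A, B, C, D with A + B + C + D = q - 1 such that q divides 2A + B + C + 1, q divides A + nB + mC + 2^(e-1) - (2^e - 1)·m, and q divides C + 2D + 1. -/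
/-- Let `n, m, e, s ≥ 1` and `q := 2^(e+s-1)`.  There are no nonnegative integers
`A, B, C, D` with `A + B + C + D = q - 1` such that `q` divides `2A + B + C + 1`,
`q` divides `A + nB + mC + 2^(e-1) - (2^e - 1)·m`, and `q` divides `C + 2D + 1`. -/
theorem stmt_7 (n m e s : ℕ) (hn : 1 ≤ n) (hm : 1 ≤ m) (he : 1 ≤ e) (hs : 1 ≤ s) :
    ¬ ∃ A B C D : ℕ,
      A + B + C + D = 2 ^ (e + s - 1) - 1 ∧
      (2 : ℤ) ^ (e + s - 1) ∣ 2 * (A : ℤ) + B + C + 1 ∧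
      (2 : ℤ) ^ (e + s - 1) ∣
        (A : ℤ) + n * B + m * C + 2 ^ (e - 1) - (2 ^ e - 1) * m ∧
      (2 : ℤ) ^ (e + s - 1) ∣ (C : ℤ) + 2 * D + 1 := by
  rintro ⟨A, B, C, D, h0, h1, h2, h3⟩
  have hpow : (2 : ℕ) ^ (e - 1) ≤ 2 ^ (e + s - 2) :=
    Nat.pow_le_pow_right (by norm_num) (by omega)
  have hq : (2 : ℕ) ^ (e + s - 1) = 2 * 2 ^ (e + s - 2) := by
    rw [← pow_succ']
    congr 1
    omega
  have he2 : (2 : ℤ) ^ e = 2 * 2 ^ (e - 1) := by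
    rw [← pow_succ']
    congr 1
    omega
  have hpos : 0 < (2 : ℕ) ^ (e - 1) := by positivity
  have hcop : IsCoprime ((2 : ℤ) ^ (e + s - 1)) (1 - 2 * (m : ℤ)) :=
    IsCoprime.pow_left ⟨m, 1, by ring⟩
  have hqz : ((2 ^ (e + s - 1) : ℕ) : ℤ) = (2 : ℤ) ^ (e + s - 1) := by push_cast; rfl
  have hpz : ((2 ^ (e - 1) : ℕ) : ℤ) = (2 : ℤ) ^ (e - 1) := by push_cast; rfl
  rw [he2] at h2
  rw [← hqz] at h1 h2 h3 hcop
  rw [← hpz] at h2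
  generalize (2 : ℕ) ^ (e + s - 1) = q at *
  generalize (2 : ℕ) ^ (e - 1) = p at *
  generalize (2 : ℕ) ^ (e + s - 2) = r at *
  have key : ∀ x : ℤ, (q : ℤ) ∣ x → 0 < x → x < 2 * q → x = q := by
    rintro x ⟨k, rfl⟩ hx1 hx2
    have hk1 : 0 < k := by
      by_contra hk
      nlinarith
    have hk2 : k < 2 := by
      by_contra hk
      nlinarith
    have : k = 1 := by omega
    simp [this]
  have e1 := key _ h1 (by omega) (by omega)
  have e3 := key _ h3 (by omega) (by omega)
  have hB : B = 0 := by omega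
  have hC : (C : ℤ) = q - 1 - 2 * A := by omega
  subst hB
  have h4 : (q : ℤ) ∣ (1 - 2 * (m : ℤ)) * (A + p) := by
    have := Int.dvd_sub h2 (Int.dvd_mul_right (q : ℤ) (m : ℤ))
    convert this using 1
    rw [hC]
    push_cast
    ring
  have h5 := hcop.dvd_of_dvd_mul_left h4
  have h6 := Int.le_of_dvd (by omega) h5
  omega
end

section
/- Let n, m, e, h be integers with n ≥ 1, m ≥ 1, e ≥ 1, h ≥ 2, and set q := 2^(e+h-1). Then nonnegative integers A, B, C, D satisfy A + B + C + D = q - 1 together with: q divides 2A + B + C + 1, q divides A + nB + mC + 2^(e+h-2) - (2^e - 1)·m + 2^(e-1), and q divides C + 2D + 1, if and only if (A, B, C, D) = (2^(e+h-2) - 2^(e-1), 0, 2^e - 1, 2^(e+h-2) - 2^(e-1)). -/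
/-- Let `n, m, e ≥ 1`, `h ≥ 2` and `q := 2^(e+h-1)`.  Nonnegative integers
`A, B, C, D` satisfy `A + B + C + D = q - 1`, `q ∣ 2A + B + C + 1`,
`q ∣ A + nB + mC + 2^(e+h-2) - (2^e - 1)·m + 2^(e-1)`, and `q ∣ C + 2D + 1`
if and only if `(A, B, C, D) = (2^(e+h-2) - 2^(e-1), 0, 2^e - 1, 2^(e+h-2) - 2^(e-1))`. -/
theorem stmt_8 (n m e h : ℕ) (hn : 1 ≤ n) (hm : 1 ≤ m) (he : 1 ≤ e) (hh : 2 ≤ h)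
    (A B C D : ℕ) :
    (A + B + C + D = 2 ^ (e + h - 1) - 1 ∧
      (2 : ℤ) ^ (e + h - 1) ∣ 2 * (A : ℤ) + B + C + 1 ∧
      (2 : ℤ) ^ (e + h - 1) ∣
        (A : ℤ) + n * B + m * C + 2 ^ (e + h - 2) - (2 ^ e - 1) * m + 2 ^ (e - 1) ∧
      (2 : ℤ) ^ (e + h - 1) ∣ (C : ℤ) + 2 * D + 1) ↔
    (A = 2 ^ (e + h - 2) - 2 ^ (e - 1) ∧ B = 0 ∧ C = 2 ^ e - 1 ∧
      D = 2 ^ (e + h - 2) - 2 ^ (e - 1)) := by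
  obtain ⟨a, rfl⟩ : ∃ a, e = a + 1 := ⟨e - 1, by omega⟩
  obtain ⟨b, rfl⟩ : ∃ b, h = b + 2 := ⟨h - 2, by omega⟩
  have e1 : a + 1 + (b + 2) - 1 = a + b + 1 + 1 := by omega
  have e2 : a + 1 + (b + 2) - 2 = a + b + 1 := by omega
  have e3 : a + 1 - 1 = a := by omega
  rw [e1, e2, e3]
  have hcop : IsCoprime ((2 : ℤ) ^ (a + b + 1 + 1)) (2 * (m : ℤ) - 1) :=
    IsCoprime.pow_left ⟨m, -1, by ring⟩
  have hpQ : 2 ^ a ≤ 2 ^ (a + b + 1) := Nat.pow_le_pow_right (by norm_num) (by omega)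
  have hp : 0 < 2 ^ a := by positivity
  rw [pow_succ (2 : ℕ) (a + b + 1), pow_succ (2 : ℤ) a, pow_succ (2 : ℕ) a]
  rw [pow_succ (2 : ℤ) (a + b + 1)] at hcop ⊢
  have c1 : (2 : ℤ) ^ (a + b + 1) = ((2 ^ (a + b + 1) : ℕ) : ℤ) := by push_cast; rfl
  have c2 : (2 : ℤ) ^ a = ((2 ^ a : ℕ) : ℤ) := by push_cast; rfl
  rw [c1] at hcop
  rw [c1, c2]
  generalize 2 ^ (a + b + 1) = Q at *
  generalize 2 ^ a = p at *
  constructor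
  · rintro ⟨h1, ⟨k, hk⟩, h3, ⟨l, hl⟩⟩
    have hk1 : k = 1 := by
      have : 0 < k := by by_contra hc; nlinarith
      have : k < 2 := by by_contra hc; nlinarith [show (A : ℤ) + B + C + D = Q * 2 - 1 by omega]
      omega
    have hl1 : l = 1 := by
      have : 0 < l := by by_contra hc; nlinarith
      have : l < 2 := by by_contra hc; nlinarith [show (A : ℤ) + B + C + D = Q * 2 - 1 by omega]
      omega
    subst hk1 hl1
    have hB : B = 0 := by omega
    subst hB
    obtain ⟨c, hc⟩ : ∃ c, C + 1 = 2 * c := ⟨Q - A, by omega⟩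
    have hA : (A : ℤ) = Q - c := by omega
    have hC : (C : ℤ) = 2 * c - 1 := by omega
    rw [hA, hC] at h3
    have h4 : (Q : ℤ) * 2 ∣ (2 * (m : ℤ) - 1) * (c - p) := by
      have := dvd_sub h3 (dvd_refl ((Q : ℤ) * 2))
      refine this.trans (dvd_of_eq ?_)
      push_cast
      ring
    have h5 := hcop.dvd_of_dvd_mul_left h4
    have h6 : (c : ℤ) - p = 0 := by
      apply Int.eq_zero_of_abs_lt_dvd h5
      rw [abs_lt]
      constructor <;> omega
    omega
  · rintro ⟨hA, rfl, hC, hD⟩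
    have hA' : (A : ℤ) = Q - p := by omega
    have hC' : (C : ℤ) = p * 2 - 1 := by omega
    have hD' : (D : ℤ) = Q - p := by omega
    refine ⟨by omega, ⟨1, by push_cast; linarith⟩, ⟨1, ?_⟩, ⟨1, by linarith⟩⟩
    rw [hA', hC']
    push_cast
    ring
end

section
/- Let e ≥ 1 and h ≥ 2 be integers. Then the 2-adic valuation of the product of binomial coefficients C(2^(e+h-1) - 1, 2^e - 1) · C(2^e·(2^(h-1) - 1), 2^(e-1)·(2^(h-1) - 1)) equals h - 1. -/
theorem s_two_mul (n : ℕ) : (Nat.digits 2 (2 * n)).sum = (Nat.digits 2 n).sum := by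
  rcases Nat.eq_zero_or_pos n with rfl | hn
  · simp
  · rw [Nat.digits_def' (by norm_num) (by omega)]
    simp

theorem s_two_mul_add_one (n : ℕ) :
    (Nat.digits 2 (2 * n + 1)).sum = (Nat.digits 2 n).sum + 1 := by
  rw [Nat.digits_def' (by norm_num) (by omega)]
  have h1 : (2 * n + 1) % 2 = 1 := by omega
  have h2 : (2 * n + 1) / 2 = n := by omega
  rw [h1, h2, List.sum_cons, add_comm]

theorem s_pow_mul (a n : ℕ) : (Nat.digits 2 (2 ^ a * n)).sum = (Nat.digits 2 n).sum := by
  induction a with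
  | zero => simp
  | succ a ih => rw [pow_succ', mul_assoc, s_two_mul, ih]

theorem s_pow_sub_one (a : ℕ) : (Nat.digits 2 (2 ^ a - 1)).sum = a := by
  induction a with
  | zero => simp
  | succ a ih =>
    have hp : 0 < 2 ^ a := by positivity
    have h1 : 2 ^ (a + 1) - 1 = 2 * (2 ^ a - 1) + 1 := by rw [pow_succ]; omega
    rw [h1, s_two_mul_add_one, ih]

/-- For integers `e ≥ 1` and `h ≥ 2`, the `2`-adic valuation of
`C(2^(e+h-1) - 1, 2^e - 1) · C(2^e·(2^(h-1) - 1), 2^(e-1)·(2^(h-1) - 1))`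
equals `h - 1`. -/
theorem stmt_9 (e h : ℕ) (he : 1 ≤ e) (hh : 2 ≤ h) :
    padicValNat 2
      (Nat.choose (2 ^ (e + h - 1) - 1) (2 ^ e - 1) *
        Nat.choose (2 ^ e * (2 ^ (h - 1) - 1)) (2 ^ (e - 1) * (2 ^ (h - 1) - 1)))
      = h - 1 := by
  obtain ⟨d, rfl⟩ : ∃ d, e = d + 1 := ⟨e - 1, by omega⟩
  obtain ⟨f, rfl⟩ : ∃ f, h = f + 1 := ⟨h - 1, by omega⟩
  have e1 : d + 1 + (f + 1) - 1 = d + 1 + f := by omega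
  simp only [e1, Nat.add_sub_cancel]
  have hp : 0 < 2 ^ (d + 1) := by positivity
  have hq : 0 < 2 ^ f := by positivity
  have hsum : 2 ^ (d + 1 + f) - 1 = 2 ^ (d + 1) * (2 ^ f - 1) + (2 ^ (d + 1) - 1) := by
    rw [pow_add, Nat.mul_sub, mul_one]
    have := Nat.le_mul_of_pos_right (2 ^ (d + 1)) hq
    omega
  have hsum2 : 2 ^ (d + 1) * (2 ^ f - 1) = 2 ^ d * (2 ^ f - 1) + 2 ^ d * (2 ^ f - 1) := by
    rw [pow_succ]; ring
  have A := sub_one_mul_padicValNat_choose_eq_sub_sum_digits' (p := 2)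
    (k := 2 ^ (d + 1) - 1) (n := 2 ^ (d + 1) * (2 ^ f - 1))
  have B := sub_one_mul_padicValNat_choose_eq_sub_sum_digits' (p := 2)
    (k := 2 ^ d * (2 ^ f - 1)) (n := 2 ^ d * (2 ^ f - 1))
  rw [← hsum, s_pow_mul, s_pow_sub_one, s_pow_sub_one, s_pow_sub_one] at A
  rw [← hsum2, s_pow_mul, s_pow_mul, s_pow_sub_one] at B
  rw [padicValNat.mul]
  · omega
  · exact (Nat.choose_pos (by omega)).ne'
  · exact (Nat.choose_pos (by omega)).ne'
end

section
/- Let e ≥ 1 and h ≥ 2 be integers. Then the 2-adic valuation of the product of binomial coefficients C(2^(e+h-1) - 1, 2^(e+h-2) - 1) · C(2^(e+h-2), 2^(e-1)) equals h - 1. -/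
theorem val_choose_two_pow (n a : ℕ) (h : a ≤ n) :
    padicValNat 2 (Nat.choose (2 ^ n) (2 ^ a)) + a = n := by
  have hle : 2 ^ a ≤ 2 ^ n := Nat.pow_le_pow_right (by norm_num) h
  have h1 := Nat.Prime.emultiplicity_choose_prime_pow_add_emultiplicity Nat.prime_two hle
    (pow_ne_zero a (by norm_num))
  rw [← padicValNat_eq_emultiplicity (Nat.choose_pos hle).ne',
    ← padicValNat_eq_emultiplicity (pow_ne_zero a (by norm_num)), padicValNat.prime_pow] at h1
  exact_mod_cast h1

theorem val_choose_pred (n : ℕ) :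
    padicValNat 2 (Nat.choose (2 ^ (n + 1) - 1) (2 ^ n - 1)) = 0 := by
  have h1 := Nat.add_one_mul_choose_eq (2 ^ (n + 1) - 1) (2 ^ n - 1)
  have hle : 2 ^ n ≤ 2 ^ (n + 1) := Nat.pow_le_pow_right (by norm_num) (by omega)
  rw [Nat.sub_add_cancel Nat.one_le_two_pow, Nat.sub_add_cancel Nat.one_le_two_pow] at h1
  have h2 := congrArg (padicValNat 2) h1
  rw [padicValNat.mul (by positivity) (Nat.choose_pos (by omega)).ne',
    padicValNat.mul (Nat.choose_pos hle).ne' (by positivity),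
    padicValNat.prime_pow, padicValNat.prime_pow] at h2
  have h3 := val_choose_two_pow (n + 1) n (by omega)
  omega

/-- For integers `e ≥ 1` and `h ≥ 2`, the `2`-adic valuation of
`C(2^(e+h-1) - 1, 2^(e+h-2) - 1) · C(2^(e+h-2), 2^(e-1))` equals `h - 1`. -/
theorem stmt_10 (e h : ℕ) (he : 1 ≤ e) (hh : 2 ≤ h) :
    padicValNat 2
      (Nat.choose (2 ^ (e + h - 1) - 1) (2 ^ (e + h - 2) - 1) *
        Nat.choose (2 ^ (e + h - 2)) (2 ^ (e - 1)))
      = h - 1 := by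
  have e1 : e + h - 1 = (e + h - 2) + 1 := by omega
  have hle1 : 2 ^ (e + h - 2) ≤ 2 ^ (e + h - 2 + 1) :=
    Nat.pow_le_pow_right (by norm_num) (by omega)
  have hle2 : 2 ^ (e - 1) ≤ 2 ^ (e + h - 2) := Nat.pow_le_pow_right (by norm_num) (by omega)
  rw [e1, padicValNat.mul (Nat.choose_pos (by omega)).ne' (Nat.choose_pos hle2).ne',
    val_choose_pred]
  have h3 := val_choose_two_pow (e + h - 2) (e - 1) (by omega)
  omega
end

section
/- Let n, m, e, s be integers with n ≥ 1, m ≥ 1, e ≥ 1, s ≥ 1, and set q := 2^(e+s-1). Then there exist no nonnegative integers A, B, C, D with A + B + C + D = q - 1 such that q divides 2A + B + C + 2^(e-1), q divides A + nB + mC + 2^(e-1) - n·2^(e-1), and q divides C + 2D + 2. -/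
/-- Let `n, m, e, s ≥ 1` and `q := 2^(e+s-1)`.  There are no nonnegative integers
`A, B, C, D` with `A + B + C + D = q - 1` such that `q` divides `2A + B + C + 2^(e-1)`,
`q` divides `A + nB + mC + 2^(e-1) - n·2^(e-1)`, and `q` divides `C + 2D + 2`. -/
theorem stmt_11 (n m e s : ℕ) (hn : 1 ≤ n) (hm : 1 ≤ m) (he : 1 ≤ e) (hs : 1 ≤ s) :
    ¬ ∃ A B C D : ℕ,
      A + B + C + D = 2 ^ (e + s - 1) - 1 ∧
      (2 : ℤ) ^ (e + s - 1) ∣ 2 * (A : ℤ) + B + C + 2 ^ (e - 1) ∧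
      (2 : ℤ) ^ (e + s - 1) ∣
        (A : ℤ) + n * B + m * C + 2 ^ (e - 1) - n * 2 ^ (e - 1) ∧
      (2 : ℤ) ^ (e + s - 1) ∣ (C : ℤ) + 2 * D + 2 := by
  rintro ⟨A, B, C, D, h0, h1, h2, h3⟩
  obtain ⟨a, rfl⟩ : ∃ a, e = a + 1 := ⟨e - 1, by omega⟩
  obtain ⟨b, rfl⟩ : ∃ b, s = b + 1 := ⟨s - 1, by omega⟩
  have e1 : a + 1 + (b + 1) - 1 = (a + b) + 1 := by omega
  have e2 : a + 1 - 1 = a := by omega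
  rw [e1] at h0 h1 h2 h3
  rw [e2] at h1 h2
  have hEpos : (0 : ℤ) < 2 ^ a := by positivity
  have hEh : (2 : ℤ) ^ a ≤ 2 ^ (a + b) := pow_le_pow_right₀ (by norm_num) (by omega)
  have h0' : (A : ℤ) + B + C + D = 2 ^ (a + b + 1) - 1 := by
    have hp : 1 ≤ 2 ^ (a + b + 1) := Nat.one_le_two_pow
    zify [hp] at h0
    exact h0
  have hcop : IsCoprime ((2 : ℤ) ^ (a + b)) (2 * m - 1) :=
    IsCoprime.pow_left ⟨m, -1, by ring⟩
  rw [pow_succ] at h0' h1 h2 h3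
  generalize (2 : ℤ) ^ (a + b) = h at *
  generalize (2 : ℤ) ^ a = E at *
  obtain ⟨k, hk⟩ := h3
  have hA : (0 : ℤ) ≤ A := by positivity
  have hB : (0 : ℤ) ≤ B := by positivity
  have hC : (0 : ℤ) ≤ C := by positivity
  have hD : (0 : ℤ) ≤ D := by positivity
  have hk1 : 0 < k := by
    by_contra hc
    nlinarith
  have hk2 : k < 3 := by
    by_contra hc
    nlinarith
  have hk3 : k = 1 ∨ k = 2 := by omega
  rcases hk3 with rfl | rfl
  · -- main case
    have hBE : (B : ℤ) = E := by
      have hd : h * 2 ∣ E - B := by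
        have : E - (B : ℤ) = (2 * (A : ℤ) + B + C + E) - h * 2 := by linarith
        rw [this]
        exact dvd_sub_self_right.mpr h1
      have := Int.eq_zero_of_abs_lt_dvd hd (by rw [abs_lt]; constructor <;> linarith)
      linarith
    obtain ⟨c, hc⟩ : ∃ c : ℤ, (C : ℤ) = 2 * c := ⟨h - D - 1, by linarith⟩
    have hAc : (A : ℤ) = h - E - c := by linarith
    have h2' : h * 2 ∣ (2 * (m : ℤ) - 1) * c + h := by
      have : (2 * (m : ℤ) - 1) * c + h
        = (A : ℤ) + n * B + m * C + E - n * E := by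
        rw [hBE, hc, hAc]; ring
      rw [this]; exact h2
    have hd : h ∣ (2 * (m : ℤ) - 1) * c :=
      (dvd_add_left (dvd_refl h)).mp ((Dvd.intro _ rfl).trans h2')
    have hdc : h ∣ c := hcop.dvd_of_dvd_mul_left hd
    have hc0 : c = 0 := Int.eq_zero_of_abs_lt_dvd hdc
      (by rw [abs_lt]; constructor <;> linarith)
    rw [hc0] at h2'
    have := Int.le_of_dvd (by linarith) h2'
    linarith
  · have hq : 2 * (A : ℤ) + B + C + E = E := by linarith
    rw [hq] at h1
    have := Int.le_of_dvd hEpos h1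
    linarith
end

section
/- Let n, m, e, h be integers with n ≥ 1, m ≥ 1, e ≥ 1, h ≥ 2, and set q := 2^(e+h-1). Then nonnegative integers A, B, C, D satisfy A + B + C + D = q - 1 together with: q divides 2A + B + C + 2^(e-1), q divides A + nB + mC + 2^(e+h-2) + 2^(e-1) - n·2^(e-1), and q divides C + 2D + 2, if and only if (A, B, C, D) = (2^(e+h-2) - 2^(e-1), 2^(e-1), 0, 2^(e+h-2) - 1). -/
/-- Let `n, m, e ≥ 1`, `h ≥ 2` and `q := 2^(e+h-1)`.  Nonnegative integers
`A, B, C, D` satisfy `A + B + C + D = q - 1`, `q ∣ 2A + B + C + 2^(e-1)`,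
`q ∣ A + nB + mC + 2^(e+h-2) + 2^(e-1) - n·2^(e-1)`, and `q ∣ C + 2D + 2`
if and only if `(A, B, C, D) = (2^(e+h-2) - 2^(e-1), 2^(e-1), 0, 2^(e+h-2) - 1)`. -/
theorem stmt_12 (n m e h : ℕ) (hn : 1 ≤ n) (hm : 1 ≤ m) (he : 1 ≤ e) (hh : 2 ≤ h)
    (A B C D : ℕ) :
    (A + B + C + D = 2 ^ (e + h - 1) - 1 ∧
      (2 : ℤ) ^ (e + h - 1) ∣ 2 * (A : ℤ) + B + C + 2 ^ (e - 1) ∧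
      (2 : ℤ) ^ (e + h - 1) ∣
        (A : ℤ) + n * B + m * C + 2 ^ (e + h - 2) + 2 ^ (e - 1) - n * 2 ^ (e - 1) ∧
      (2 : ℤ) ^ (e + h - 1) ∣ (C : ℤ) + 2 * D + 2) ↔
    (A = 2 ^ (e + h - 2) - 2 ^ (e - 1) ∧ B = 2 ^ (e - 1) ∧ C = 0 ∧
      D = 2 ^ (e + h - 2) - 1) := by
  obtain ⟨e, rfl⟩ := Nat.exists_eq_add_of_le' he
  obtain ⟨h, rfl⟩ := Nat.exists_eq_add_of_le' hh
  have e1 : e + 1 + (h + 2) - 1 = e + h + 2 := by omega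
  have e2 : e + 1 + (h + 2) - 2 = e + h + 1 := by omega
  have e3 : e + 1 - 1 = e := by omega
  rw [e1, e2, e3]
  obtain ⟨r, hr⟩ : ∃ r : ℕ, r = 2 ^ (e + h + 1) := ⟨_, rfl⟩
  obtain ⟨p, hp⟩ : ∃ p : ℕ, p = 2 ^ e := ⟨_, rfl⟩
  have hp0 : 0 < p := by rw [hp]; positivity
  have hpr : 2 * p ≤ r := by
    rw [hp, hr, show 2 * 2 ^ e = 2 ^ (e + 1) by ring]
    exact Nat.pow_le_pow_right (by norm_num) (by omega)
  have hq : 2 ^ (e + h + 2) = 2 * r := by rw [hr]; ring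
  have hqz : (2 : ℤ) ^ (e + h + 2) = 2 * (r : ℤ) := by exact_mod_cast hq
  have hrz : (2 : ℤ) ^ (e + h + 1) = (r : ℤ) := by exact_mod_cast hr.symm
  have hpz : (2 : ℤ) ^ e = (p : ℤ) := by exact_mod_cast hp.symm
  have hodd : IsCoprime (2 * (r : ℤ)) (2 * (m : ℤ) - 1) := by
    rw [← hqz]
    apply IsCoprime.pow_left
    exact ⟨m, -1, by ring⟩
  rw [hq, hqz, hrz, hpz, ← hr, ← hp]
  constructor
  · rintro ⟨hs, ⟨a, ha⟩, h3, ⟨b, hb⟩⟩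
    have hsz : (A : ℤ) + B + C + D = 2 * r - 1 := by omega
    have key : (p : ℤ) - B = 2 * r * (a + b - 2) := by linarith
    have hab : a + b - 2 = 0 := by
      by_contra hne
      rcases lt_or_gt_of_ne hne with hlt | hgt
      · have : 2 * (r : ℤ) * (a + b - 2) ≤ 2 * r * (-1) :=
          mul_le_mul_of_nonneg_left (by omega) (by omega)
        omega
      · have : 2 * (r : ℤ) * 1 ≤ 2 * r * (a + b - 2) :=
          mul_le_mul_of_nonneg_left (by omega) (by omega)
        omega
    have hB : B = p := by
      rw [hab] at key
      omega
    have ha1 : 0 < a := by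
      by_contra hne
      have : 2 * (r : ℤ) * a ≤ 0 := mul_nonpos_of_nonneg_of_nonpos (by omega) (by omega)
      omega
    have hb1 : 0 < b := by
      by_contra hne
      have : 2 * (r : ℤ) * b ≤ 0 := mul_nonpos_of_nonneg_of_nonpos (by omega) (by omega)
      omega
    have ha' : a = 1 := by omega
    have hb' : b = 1 := by omega
    subst ha' hb' hB
    obtain ⟨c, rfl⟩ : ∃ c, C = 2 * c := ⟨C / 2, by omega⟩
    have hA : (A : ℤ) = r - B - c := by push_cast at ha; linarith
    have hd : 2 * (r : ℤ) ∣ (2 * m - 1) * c := by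
      have h4 := dvd_sub h3 (dvd_refl (2 * (r : ℤ)))
      rw [hA] at h4
      have h5 : (2 * (m : ℤ) - 1) * c = r - B - c + n * B + m * ((2 * c : ℕ) : ℤ) + r + B
          - n * B - 2 * r := by
        push_cast
        ring
      rw [h5]
      exact h4
    have hc : 2 * (r : ℤ) ∣ c := hodd.dvd_of_dvd_mul_left hd
    have hc0 : (c : ℤ) = 0 := Int.eq_zero_of_dvd_of_nonneg_of_lt (by omega) (by omega) hc
    omega
  · rintro ⟨rfl, rfl, rfl, rfl⟩
    have c1 : ((r - B : ℕ) : ℤ) = r - B := by omega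
    have c2 : ((r - 1 : ℕ) : ℤ) = r - 1 := by omega
    refine ⟨by omega, ?_, ?_, ?_⟩
    · rw [c1]; exact ⟨1, by push_cast; ring⟩
    · rw [c1]; exact ⟨1, by push_cast; ring⟩
    · rw [c2]; exact ⟨1, by push_cast; ring⟩
end

section
/- Let m ≥ 2 be an integer, set h := ⌈log₂ m⌉ + 2, and let n be an integer with n ≥ m and n > 2^(⌈log₂ m⌉). Then the unique quadruple (A, B, C, D) of nonnegative integers satisfying A + B + C + D = 2^(h-1) - 1, 2A + B + C ≤ 2^(h-1) - 1, A + nB + mC ≤ 2^(h-1) - 1, and C + 2D ≤ 2^(h-1) - 1 is (A, B, C, D) = (2^(h-2) - 1, 0, 1, 2^(h-2) - 1). -/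
/-- Let `m ≥ 2`, `h := ⌈log₂ m⌉ + 2`, and let `n` be an integer with `n ≥ m` and
`n > 2^(⌈log₂ m⌉)`.  Then the unique quadruple `(A, B, C, D)` of nonnegative
integers with `A + B + C + D = 2^(h-1) - 1`, `2A + B + C ≤ 2^(h-1) - 1`,
`A + nB + mC ≤ 2^(h-1) - 1`, and `C + 2D ≤ 2^(h-1) - 1` is
`(A, B, C, D) = (2^(h-2) - 1, 0, 1, 2^(h-2) - 1)`. -/
theorem stmt_13 (m : ℕ) (hm : 2 ≤ m) (n : ℕ) (hnm : m ≤ n)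
    (hn : 2 ^ (Nat.clog 2 m) < n) (A B C D : ℕ) :
    (A + B + C + D = 2 ^ (Nat.clog 2 m + 2 - 1) - 1 ∧
      2 * A + B + C ≤ 2 ^ (Nat.clog 2 m + 2 - 1) - 1 ∧
      A + n * B + m * C ≤ 2 ^ (Nat.clog 2 m + 2 - 1) - 1 ∧
      C + 2 * D ≤ 2 ^ (Nat.clog 2 m + 2 - 1) - 1) ↔
    (A = 2 ^ (Nat.clog 2 m + 2 - 2) - 1 ∧ B = 0 ∧ C = 1 ∧
      D = 2 ^ (Nat.clog 2 m + 2 - 2) - 1) := by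
  have h1 : m ≤ 2 ^ Nat.clog 2 m := Nat.le_pow_clog (by norm_num) m
  have h2 : 2 ^ (Nat.clog 2 m).pred < m := Nat.pow_pred_clog_lt_self (by norm_num) (by omega)
  have h0 : 0 < Nat.clog 2 m := Nat.clog_pos (by norm_num) hm
  obtain ⟨k, hk⟩ : ∃ k, Nat.clog 2 m = k + 1 := ⟨Nat.clog 2 m - 1, by omega⟩
  rw [hk] at h1 h2 hn ⊢
  have e1 : k + 1 + 2 - 1 = k + 2 := by omega
  have e2 : k + 1 + 2 - 2 = k + 1 := by omega
  rw [e1, e2]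
  simp only [Nat.pred_succ, Nat.pred_eq_sub_one, Nat.add_sub_cancel] at h2
  have p1 : 2 ^ (k + 1) = 2 * 2 ^ k := by ring
  have p2 : 2 ^ (k + 2) = 4 * 2 ^ k := by ring
  rw [p1] at h1 hn
  rw [p1, p2]
  generalize 2 ^ k = M at *
  constructor
  · rintro ⟨a, b, c, d⟩
    have hB : B = 0 := by
      rcases Nat.eq_zero_or_pos B with h | h
      · exact h
      · exfalso
        have q1 : (2 * M + 1) * B ≤ n * B := Nat.mul_le_mul_right _ hn
        have q2 : 2 * C ≤ m * C := Nat.mul_le_mul_right _ hm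
        have q3 : 2 * M * 1 ≤ 2 * M * B := Nat.mul_le_mul_left _ h
        rw [Nat.add_mul] at q1
        omega
    subst hB
    have hC : C < 2 := by
      by_contra h
      have q1 : (M + 1) * C ≤ m * C := Nat.mul_le_mul_right _ h2
      have q3 : M * 2 ≤ M * C := Nat.mul_le_mul_left _ (by omega)
      rw [Nat.add_mul] at q1
      omega
    interval_cases C <;> omega
  · rintro ⟨rfl, rfl, rfl, rfl⟩
    omega
end

section
/- Let e ≥ 1 be an integer. In the polynomial ring F₂[x, y, z] over the field with two elements, the element (z² + x³ + xy³ + xyz)^(2^e - 1) - (xyz)^(2^e - 1) lies in the ideal generated by x^(2^e), y^(2^e), and z^(2^e). -/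
open MvPolynomial

theorem aux_e7 {R : Type*} [CommRing R] (h2 : (2 : R) = 0) (x y z : R) (e : ℕ) :
    ∃ a b c : R, (z ^ 2 + x ^ 3 + x * y ^ 3 + x * y * z) ^ (2 ^ e - 1)
      = (x * y * z) ^ (2 ^ e - 1) + a * x ^ 2 ^ e + b * y ^ 2 ^ e + c * z ^ 2 ^ e := by
  induction e with
  | zero => exact ⟨0, 0, 0, by simp⟩
  | succ n ih =>
    obtain ⟨a, b, c, h⟩ := ih
    obtain ⟨m, hm⟩ : ∃ m, 2 ^ n = m + 1 := ⟨2 ^ n - 1, by have := Nat.one_le_two_pow (n := n); omega⟩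
    have e1 : 2 ^ (n + 1) = 2 * m + 2 := by rw [pow_succ, hm]; ring
    rw [e1]
    rw [hm] at h
    simp only [Nat.add_sub_cancel, show 2 * m + 2 - 1 = m * 2 + 1 by omega] at h ⊢
    rw [pow_succ, pow_mul, h]
    have sq : ∀ p q r s : R, (p + q + r + s) ^ 2 = p ^ 2 + q ^ 2 + r ^ 2 + s ^ 2 := by
      intro p q r s
      linear_combination (p * q + p * r + p * s + q * r + q * s + r * s) * h2
    rw [sq]
    generalize hf : z ^ 2 + x ^ 3 + x * y ^ 3 + x * y * z = f
    refine ⟨a ^ 2 * f + x * (y * z) ^ (2 * m), b ^ 2 * f + (x * z) ^ (2 * m) * x * y,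
      c ^ 2 * f + (x * y) ^ (2 * m), ?_⟩
    have : (x * y * z) ^ (2 * m) * f = (x * y * z) ^ (2 * m + 1)
        + x * (y * z) ^ (2 * m) * x ^ (2 * m + 2) + (x * z) ^ (2 * m) * x * y * y ^ (2 * m + 2)
        + (x * y) ^ (2 * m) * z ^ (2 * m + 2) := by
      rw [← hf]; ring
    linear_combination this

/-- For `e ≥ 1`, in `F₂[x, y, z]` the element
`(z² + x³ + xy³ + xyz)^(2^e - 1) - (xyz)^(2^e - 1)` lies in the ideal
`(x^(2^e), y^(2^e), z^(2^e))`. -/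
theorem stmt_14 (e : ℕ) (he : 1 ≤ e) :
    ((X 2 ^ 2 + X 0 ^ 3 + X 0 * X 1 ^ 3 + X 0 * X 1 * X 2 :
        MvPolynomial (Fin 3) (ZMod 2)) ^ (2 ^ e - 1)
      - (X 0 * X 1 * X 2) ^ (2 ^ e - 1)) ∈
    Ideal.span ({X 0 ^ 2 ^ e, X 1 ^ 2 ^ e, X 2 ^ 2 ^ e} :
      Set (MvPolynomial (Fin 3) (ZMod 2))) := by
  obtain ⟨a, b, c, h⟩ := aux_e7 (R := MvPolynomial (Fin 3) (ZMod 2))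
    (CharTwo.two_eq_zero) (X 0) (X 1) (X 2) e
  rw [h, Submodule.mem_span_triple]
  refine ⟨a, b, c, ?_⟩
  simp only [smul_eq_mul]
  ring
end

section
/- Let e ≥ 1 be an integer. In the polynomial ring (ℤ/4ℤ)[x, y, z], the element (z² + x³ + xy³ + xyz)^(2^(e+1) - 1) - (xyz)^(2^(e+1) - 1) lies in the ideal generated by x^(2^(e+1)), y^(2^(e+1)), and z^(2^(e+1)). -/
open MvPolynomial

lemma aux_four_dvd (a b c : ℕ) (hm : 1 ≤ a + b + c) (h1 : 2 * b ≤ a) (h2 : a ≤ b + c)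
    (h3 : 2 * c ≤ a + b) : 4 ∣ (b + (a + c)).choose b * (a + c).choose a := by
  have hfac : (b + (a + c)).choose b * (a + c).choose a * (a.factorial * b.factorial * c.factorial)
      = (a + b + c).factorial := by
    have e1 := Nat.add_choose_mul_factorial_mul_factorial b (a + c)
    have e2 := Nat.add_choose_mul_factorial_mul_factorial a c
    rw [← Nat.choose_symm_add] at e1 e2
    rw [show a + b + c = b + (a + c) by ring, ← e1, ← e2]
    ring
  set K := (b + (a + c)).choose b * (a + c).choose a with hK
  have hK0 : K ≠ 0 := by
    intro h
    rw [h, zero_mul] at hfac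
    exact (Nat.factorial_ne_zero _) hfac.symm
  obtain ⟨k, hk⟩ : ∃ k, Nat.log 2 (a + b + c) = k + 2 := by
    have : 2 ≤ Nat.log 2 (a + b + c) := by
      apply Nat.le_log_of_pow_le (by norm_num)
      by_contra hlt
      omega
    exact ⟨_, (Nat.sub_add_cancel this).symm⟩
  have hlo : 2 ^ (k + 2) ≤ a + b + c := by
    rw [← hk]; exact Nat.pow_log_le_self 2 (by omega)
  have hhi : a + b + c < 2 ^ (k + 3) := by
    have := Nat.lt_pow_succ_log_self (b := 2) (by norm_num) (a + b + c)
    rwa [hk] at this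
  have hv : ∀ n, n ≤ a + b + c → padicValNat 2 n.factorial =
      (∑ i ∈ Finset.Ico 1 (k + 1), n / 2 ^ i) + n / 2 ^ (k + 1) + n / 2 ^ (k + 2) := by
    intro n hn
    have hl : Nat.log 2 n < k + 3 := by
      have := Nat.log_mono_right (b := 2) hn
      omega
    have : Fact (Nat.Prime 2) := ⟨Nat.prime_two⟩
    rw [padicValNat_factorial hl, Finset.sum_Ico_succ_top (by omega),
      Finset.sum_Ico_succ_top (by omega)]
  have hval : padicValNat 2 K + (padicValNat 2 a.factorial + padicValNat 2 b.factorial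
      + padicValNat 2 c.factorial) = padicValNat 2 (a + b + c).factorial := by
    have : Fact (Nat.Prime 2) := ⟨Nat.prime_two⟩
    have ha := Nat.factorial_ne_zero a
    have hb := Nat.factorial_ne_zero b
    have hc := Nat.factorial_ne_zero c
    rw [← hfac, padicValNat.mul hK0 (by positivity), padicValNat.mul (by positivity) hc,
      padicValNat.mul ha hb]
  rw [hv a (by omega), hv b (by omega), hv c (by omega), hv _ le_rfl] at hval
  have hsum : (∑ i ∈ Finset.Ico 1 (k + 1), a / 2 ^ i) + (∑ i ∈ Finset.Ico 1 (k + 1), b / 2 ^ i)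
      + (∑ i ∈ Finset.Ico 1 (k + 1), c / 2 ^ i)
      ≤ ∑ i ∈ Finset.Ico 1 (k + 1), (a + b + c) / 2 ^ i := by
    rw [← Finset.sum_add_distrib, ← Finset.sum_add_distrib]
    apply Finset.sum_le_sum
    intro i _
    exact (Nat.add_le_add_right (Nat.div_add_div_le_add_div) _).trans
      (Nat.div_add_div_le_add_div)
  have hp2 : 2 ^ (k + 2) = 2 * 2 ^ (k + 1) := by ring
  have hp3 : 2 ^ (k + 3) = 4 * 2 ^ (k + 1) := by ring
  have hQ : 0 < 2 ^ (k + 1) := by positivity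
  have t2 : a / 2 ^ (k + 2) = 0 ∧ b / 2 ^ (k + 2) = 0 ∧ c / 2 ^ (k + 2) = 0 := by
    refine ⟨Nat.div_eq_of_lt ?_, Nat.div_eq_of_lt ?_, Nat.div_eq_of_lt ?_⟩ <;> omega
  have t2' : 1 ≤ (a + b + c) / 2 ^ (k + 2) := (Nat.one_le_div_iff (by positivity)).2 hlo
  have t1 : a / 2 ^ (k + 1) + b / 2 ^ (k + 1) + c / 2 ^ (k + 1) + 1
      ≤ (a + b + c) / 2 ^ (k + 1) := by
    generalize 2 ^ (k + 1) = Q at *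
    have hb : b / Q = 0 := Nat.div_eq_of_lt (by omega)
    have ha : a / Q < 2 := (Nat.div_lt_iff_lt_mul hQ).2 (by omega)
    have hM : 2 ≤ (a + b + c) / Q := (Nat.le_div_iff_mul_le hQ).2 (by omega)
    by_cases hc : c < Q
    · have : c / Q = 0 := Nat.div_eq_of_lt hc
      omega
    · have : c / Q < 2 := (Nat.div_lt_iff_lt_mul hQ).2 (by omega)
      have : 3 ≤ (a + b + c) / Q := (Nat.le_div_iff_mul_le hQ).2 (by omega)
      omega
  have h2 : 2 ≤ padicValNat 2 K := by omega
  have : 2 ^ 2 ∣ K := (pow_dvd_pow 2 h2).trans pow_padicValNat_dvd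
  simpa using this

/-- For `e ≥ 1`, in `(ℤ/4ℤ)[x, y, z]` the element
`(z² + x³ + xy³ + xyz)^(2^(e+1) - 1) - (xyz)^(2^(e+1) - 1)` lies in the ideal
`(x^(2^(e+1)), y^(2^(e+1)), z^(2^(e+1)))`. -/
theorem stmt_15 (e : ℕ) (he : 1 ≤ e) :
    ((X 2 ^ 2 + X 0 ^ 3 + X 0 * X 1 ^ 3 + X 0 * X 1 * X 2 :
        MvPolynomial (Fin 3) (ZMod 4)) ^ (2 ^ (e + 1) - 1)
      - (X 0 * X 1 * X 2) ^ (2 ^ (e + 1) - 1)) ∈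
    Ideal.span ({X 0 ^ 2 ^ (e + 1), X 1 ^ 2 ^ (e + 1), X 2 ^ 2 ^ (e + 1)} :
      Set (MvPolynomial (Fin 3) (ZMod 4))) := by
  have hq : 0 < 2 ^ (e + 1) := by positivity
  generalize 2 ^ (e + 1) = q at *
  obtain ⟨N, rfl⟩ : ∃ N, q = N + 1 := ⟨q - 1, by omega⟩
  rw [Nat.add_sub_cancel]
  set I := Ideal.span ({X 0 ^ (N + 1), X 1 ^ (N + 1), X 2 ^ (N + 1)} :
      Set (MvPolynomial (Fin 3) (ZMod 4))) with hI
  have hx : (X 0 ^ (N + 1) : MvPolynomial (Fin 3) (ZMod 4)) ∈ I :=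
    Ideal.subset_span (by simp)
  have hy : (X 1 ^ (N + 1) : MvPolynomial (Fin 3) (ZMod 4)) ∈ I :=
    Ideal.subset_span (by simp)
  have hz : (X 2 ^ (N + 1) : MvPolynomial (Fin 3) (ZMod 4)) ∈ I :=
    Ideal.subset_span (by simp)
  generalize (X 0 : MvPolynomial (Fin 3) (ZMod 4)) = x at *
  generalize (X 1 : MvPolynomial (Fin 3) (ZMod 4)) = y at *
  generalize (X 2 : MvPolynomial (Fin 3) (ZMod 4)) = z at *
  have key : ∀ a b c d : ℕ, a + b + c + d = N → 1 ≤ a + b + c →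
      (x ^ (3 * b + c + d) * y ^ (3 * c + d) * z ^ (2 * a + d)) *
      (((b + (a + c)).choose b * (a + c).choose a : ℕ) : MvPolynomial (Fin 3) (ZMod 4)) ∈ I := by
    intro a b c d hN hm
    by_cases h1 : N + 1 ≤ 3 * b + c + d
    · exact I.mul_mem_right _ (I.mul_mem_right _ (I.mul_mem_right _
        (I.mem_of_dvd (pow_dvd_pow x h1) hx)))
    by_cases h2 : N + 1 ≤ 3 * c + d
    · exact I.mul_mem_right _ (I.mul_mem_right _ (I.mul_mem_left _
        (I.mem_of_dvd (pow_dvd_pow y h2) hy)))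
    by_cases h3 : N + 1 ≤ 2 * a + d
    · exact I.mul_mem_right _ (I.mul_mem_left _
        (I.mem_of_dvd (pow_dvd_pow z h3) hz))
    have h4 := aux_four_dvd a b c hm (by omega) (by omega) (by omega)
    have h5 : (((b + (a + c)).choose b * (a + c).choose a : ℕ) :
        MvPolynomial (Fin 3) (ZMod 4)) = 0 := by
      have : CharP (MvPolynomial (Fin 3) (ZMod 4)) 4 := inferInstance
      exact (CharP.cast_eq_zero_iff _ 4 _).2 h4
    rw [h5, mul_zero]
    exact I.zero_mem
  have expand : (z ^ 2 + x ^ 3 + x * y ^ 3 + x * y * z) ^ N - (x * y * z) ^ N =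
      ∑ m ∈ Finset.range N, (x ^ 3 + (z ^ 2 + x * y ^ 3)) ^ (m + 1) *
        (x * y * z) ^ (N - (m + 1)) * (N.choose (m + 1) : MvPolynomial (Fin 3) (ZMod 4)) := by
    rw [show z ^ 2 + x ^ 3 + x * y ^ 3 + x * y * z =
      (x ^ 3 + (z ^ 2 + x * y ^ 3)) + x * y * z by ring, add_pow, Finset.sum_range_succ']
    simp
  rw [expand]
  refine I.sum_mem fun m hm => I.mul_mem_right _ ?_
  rw [Finset.mem_range] at hm
  rw [add_pow, Finset.sum_mul]
  refine I.sum_mem fun b hb => ?_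
  rw [Finset.mem_range] at hb
  rw [add_pow, Finset.mul_sum, Finset.sum_mul, Finset.sum_mul]
  refine I.sum_mem fun a ha => ?_
  rw [Finset.mem_range] at ha
  obtain ⟨c, hc⟩ : ∃ c, m + 1 - b = a + c := ⟨m + 1 - b - a, by omega⟩
  have hmb : m + 1 = b + (a + c) := by omega
  obtain ⟨d, hd⟩ : ∃ d, N - (m + 1) = d := ⟨_, rfl⟩
  have := key a b c d (by omega) (by omega)
  rw [hd, hc, hmb, Nat.add_sub_cancel_left]
  convert this using 1
  push_cast
  ring
end

section
/- Let e ≥ 1 be an integer. In the polynomial ring F₂[x, y, z] over the field with two elements, the element ((x³z²)^(2^(e-1)) + (xy³z²)^(2^(e-1)) + (xyz³)^(2^(e-1))) · (z² + x³ + xy³ + xyz)^(2^(e-1)) lies in the ideal generated by x^(2^(e+1)), y^(2^(e+1)), and z^(2^(e+1)). -/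
open MvPolynomial

/-- For `e ≥ 1`, in `F₂[x, y, z]` the element
`((x³z²)^(2^(e-1)) + (xy³z²)^(2^(e-1)) + (xyz³)^(2^(e-1))) · (z² + x³ + xy³ + xyz)^(2^(e-1))`
lies in the ideal `(x^(2^(e+1)), y^(2^(e+1)), z^(2^(e+1)))`. -/
theorem stmt_16 (e : ℕ) (he : 1 ≤ e) :
    (((X 0 ^ 3 * X 2 ^ 2) ^ 2 ^ (e - 1) + (X 0 * X 1 ^ 3 * X 2 ^ 2) ^ 2 ^ (e - 1)
        + (X 0 * X 1 * X 2 ^ 3) ^ 2 ^ (e - 1)) *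
      (X 2 ^ 2 + X 0 ^ 3 + X 0 * X 1 ^ 3 + X 0 * X 1 * X 2 :
        MvPolynomial (Fin 3) (ZMod 2)) ^ 2 ^ (e - 1)) ∈
    Ideal.span ({X 0 ^ 2 ^ (e + 1), X 1 ^ 2 ^ (e + 1), X 2 ^ 2 ^ (e + 1)} :
      Set (MvPolynomial (Fin 3) (ZMod 2))) := by
  obtain ⟨n, rfl⟩ : ∃ n, e = n + 1 := ⟨e - 1, by omega⟩
  have h4 : 2 ^ (n + 1 + 1) = 2 ^ n * 4 := by ring
  rw [Nat.add_sub_cancel, h4]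
  simp only [add_pow_char_pow, mul_pow, pow_right_comm _ _ (2 ^ n), pow_mul]
  generalize (X 0 : MvPolynomial (Fin 3) (ZMod 2)) ^ 2 ^ n = a
  generalize (X 1 : MvPolynomial (Fin 3) (ZMod 2)) ^ 2 ^ n = b
  generalize (X 2 : MvPolynomial (Fin 3) (ZMod 2)) ^ 2 ^ n = c
  have ha : a ^ 4 ∈ Ideal.span {a ^ 4, b ^ 4, c ^ 4} := Ideal.subset_span (by simp)
  have hb : b ^ 4 ∈ Ideal.span {a ^ 4, b ^ 4, c ^ 4} := Ideal.subset_span (by simp)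
  have hc : c ^ 4 ∈ Ideal.span {a ^ 4, b ^ 4, c ^ 4} := Ideal.subset_span (by simp)
  convert add_mem (add_mem
    (Ideal.mul_mem_left _ (a^2*c^2 + 2*b^3*c^2 + 2*b*c^3) ha)
    (Ideal.mul_mem_left _ (a^2*b^2*c^2 + 2*a^2*c^3) hb))
    (Ideal.mul_mem_left _ (a^3 + a*b^3 + a*b*c + a^2*b^2) hc) using 1
  ring
end
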